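/- arXiv:1907.08735 — 4 statements merged into one kernel-verified Lean document; each statement's English description precedes it below -/
import Mathlib

section
/- For every arrival sequence S = (s_1, …, s_T) with all s_t ∈ (0,1], the randomized threshold algorithm that draws τ from the probability measure μ₁ on [0,1] with CDF F₁ and then runs THR(τ) satisfies ∫_{[0,1]} THR(τ)(S) dμ₁(τ) ≥ (3/7)·OPT⁺(S). -/
open MeasureTheory Set

/-- Value of the threshold policy `THR(τ)` on arrival sequence `S`:
process items in order, accept an item of size `s` iff `τ ≤ s` and it fits the
remaining capacity; return the total size accepted. -/
noncomputable def thrVal (τ : ℝ) (S : List ℝ) : ℝ :=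
  S.foldl (fun acc s => if τ ≤ s ∧ acc + s ≤ 1 then acc + s else acc) 0

/-- The CDF `F₁` of the 3/7-competitive threshold distribution:
`F₁(x) = (4/7 − x)/(1 − 2x)` on `[0, 3/7]` and `F₁(x) = 1` for `x > 3/7`
(in particular an atom of mass 4/7 at 0). -/
noncomputable def F1 (x : ℝ) : ℝ :=
  if x < 0 then 0 else if x ≤ 3/7 then (4/7 - x) / (1 - 2*x) else 1

/-- Running `THR(τ)` starting from already accepted total size `acc`. -/
noncomputable def thrRun (τ acc : ℝ) (S : List ℝ) : ℝ :=
  S.foldl (fun acc s => if τ ≤ s ∧ acc + s ≤ 1 then acc + s else acc) acc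

lemma thrRun_cons (τ acc s : ℝ) (S : List ℝ) :
    thrRun τ acc (s :: S) =
      thrRun τ (if τ ≤ s ∧ acc + s ≤ 1 then acc + s else acc) S := rfl

lemma le_thrRun {τ : ℝ} {S : List ℝ} (hS : ∀ s ∈ S, 0 < s) (acc : ℝ) :
    acc ≤ thrRun τ acc S := by
  induction S generalizing acc with
  | nil => exact le_rfl
  | cons s S ih =>
    rw [List.forall_mem_cons] at hS
    rw [thrRun_cons]
    refine le_trans ?_ (ih hS.2 _)
    split_ifs <;> linarith [hS.1]

lemma thrRun_le_one (τ : ℝ) (S : List ℝ) {acc : ℝ} (hacc : acc ≤ 1) :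
    thrRun τ acc S ≤ 1 := by
  induction S generalizing acc with
  | nil => exact hacc
  | cons s S ih =>
    rw [thrRun_cons]
    apply ih
    split_ifs with h
    exacts [h.2, hacc]

/-- An item above the threshold is either accepted, or did not fit. -/
lemma le_thrRun_or_lt_thrRun {τ s acc : ℝ} {S : List ℝ} (hS : ∀ s ∈ S, 0 < s) (hacc : 0 ≤ acc)
    (hs : s ∈ S) (hτ : τ ≤ s) : s ≤ thrRun τ acc S ∨ 1 - s < thrRun τ acc S := by
  induction S generalizing acc with
  | nil => simp at hs
  | cons x S ih =>
    rw [List.forall_mem_cons] at hS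
    rw [thrRun_cons]
    have hmono := le_thrRun (τ := τ) hS.2 (if τ ≤ x ∧ acc + x ≤ 1 then acc + x else acc)
    rcases List.mem_cons.1 hs with rfl | hs
    · by_cases h : acc + s ≤ 1
      · left
        rw [if_pos ⟨hτ, h⟩] at hmono ⊢
        linarith
      · right
        rw [if_neg (fun h' => h h'.2)] at hmono ⊢
        linarith
    · refine ih hS.2 ?_ hs
      split_ifs <;> linarith [hS.1]

/-- The greedy policy packs everything unless some item does not fit. -/
lemma thrRun_zero_eq_or_exists_lt {S : List ℝ} (hS : ∀ s ∈ S, 0 < s) (acc : ℝ) :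
    thrRun 0 acc S = acc + S.sum ∨ ∃ s ∈ S, 1 - s < thrRun 0 acc S := by
  induction S generalizing acc with
  | nil => simp [thrRun]
  | cons x S ih =>
    rw [List.forall_mem_cons] at hS
    rw [thrRun_cons]
    by_cases h : acc + x ≤ 1
    · rw [if_pos ⟨hS.1.le, h⟩]
      rcases ih hS.2 (acc + x) with h' | ⟨s, hs, h'⟩
      · left
        rw [h', List.sum_cons, add_assoc]
      · exact Or.inr ⟨s, List.mem_cons_of_mem _ hs, h'⟩
    · rw [if_neg (fun h' => h h'.2)]
      exact Or.inr ⟨x, List.mem_cons_self, by linarith [le_thrRun (τ := 0) hS.2 acc]⟩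

/-- If all items above the threshold have size at least `v` and there is one, then `THR(τ)`
packs at least `v`. -/
lemma le_thrVal_of_forall {τ v : ℝ} {S : List ℝ} (hS : ∀ s ∈ S, s ∈ Ioc (0 : ℝ) 1)
    (hv : ∀ s ∈ S, τ ≤ s → v ≤ s) (hex : ∃ s ∈ S, τ ≤ s) : v ≤ thrVal τ S := by
  change v ≤ thrRun τ 0 S
  induction S with
  | nil => simp at hex
  | cons x S ih =>
    rw [List.forall_mem_cons] at hS hv
    rw [thrRun_cons, zero_add]
    by_cases h : τ ≤ x
    · rw [if_pos ⟨h, hS.1.2⟩]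
      exact (hv.1 h).trans (le_thrRun (fun s hs => (hS.2 s hs).1) x)
    · rw [if_neg (fun h' => h h'.1)]
      refine ih hS.2 hv.2 ?_
      obtain ⟨s, hs, hτ⟩ := hex
      rcases List.mem_cons.1 hs with rfl | hs
      exacts [absurd hτ h, ⟨s, hs, hτ⟩]

lemma le_thrVal_or_lt_thrVal {τ s : ℝ} {S : List ℝ} (hS : ∀ s ∈ S, 0 < s)
    (hs : s ∈ S) (hτ : τ ≤ s) : s ≤ thrVal τ S ∨ 1 - s < thrVal τ S :=
  le_thrRun_or_lt_thrRun hS le_rfl hs hτ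

lemma le_thrVal_of_le_half {τ s : ℝ} {S : List ℝ} (hS : ∀ s ∈ S, 0 < s)
    (hs : s ∈ S) (hτ : τ ≤ s) (hs2 : s ≤ 1 / 2) : s ≤ thrVal τ S := by
  rcases le_thrVal_or_lt_thrVal hS hs hτ with h | h <;> linarith

lemma thrVal_of_nonpos {τ : ℝ} {S : List ℝ} (hS : ∀ s ∈ S, 0 < s) (hτ : τ ≤ 0) :
    thrVal τ S = thrVal 0 S := by
  refine List.foldl_ext _ _ _ fun acc s hs => ?_
  simp only [hτ.trans (hS s hs).le, (hS s hs).le]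

lemma measurable_thrRun (S : List ℝ) {f : ℝ → ℝ} (hf : Measurable f) :
    Measurable fun τ => thrRun τ (f τ) S := by
  induction S generalizing f with
  | nil => exact hf
  | cons s S ih =>
    simp only [thrRun_cons]
    refine ih (Measurable.ite ?_ (hf.add_const s) hf)
    exact (measurableSet_le measurable_id measurable_const).inter
      (measurableSet_le (hf.add_const s) measurable_const)

lemma F1_of_mem {x : ℝ} (h0 : 0 ≤ x) (h1 : x ≤ 3 / 7) : F1 x = (4/7 - x) / (1 - 2*x) := by
  rw [F1, if_neg h0.not_gt, if_pos h1]

lemma F1_mul {x : ℝ} (h0 : 0 ≤ x) (h1 : x ≤ 3 / 7) : F1 x * (1 - 2*x) = 4/7 - x := by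
  rw [F1_of_mem h0 h1, div_mul_cancel₀]
  linarith

lemma F1_mem_Icc {x : ℝ} (h0 : 0 ≤ x) (h1 : x ≤ 3 / 7) : F1 x ∈ Icc (4/7 : ℝ) 1 := by
  rw [F1_of_mem h0 h1]
  constructor
  · rw [le_div_iff₀] <;> linarith
  · rw [div_le_one] <;> linarith

/-- Lower bound on the expected value from lower bounds on three threshold ranges. -/
lemma le_integral_thrVal {μ : Measure ℝ} [IsProbabilityMeasure μ]
    (hμ : ∀ x : ℝ, μ (Iic x) = ENNReal.ofReal (F1 x)) {S : List ℝ} (hS : ∀ s ∈ S, 0 < s)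
    {a g u v : ℝ} (ha0 : 0 ≤ a) (ha1 : a ≤ 3 / 7) (hg : g ≤ thrVal 0 S)
    (hu : ∀ τ ∈ Ioc 0 a, u ≤ thrVal τ S) (hv : ∀ τ ∈ Ioc a (3 / 7), v ≤ thrVal τ S) :
    4/7 * g + (F1 a - 4/7) * u + (1 - F1 a) * v ≤ ∫ τ, thrVal τ S ∂μ := by
  have hIic {x : ℝ} (h0 : 0 ≤ x) (h1 : x ≤ 3 / 7) : μ.real (Iic x) = F1 x := by
    rw [measureReal_def, hμ, ENNReal.toReal_ofReal]
    linarith [(F1_mem_Icc h0 h1).1]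
  have hIoc {x y : ℝ} (h0 : 0 ≤ x) (hxy : x ≤ y) (h1 : y ≤ 3 / 7) :
      μ.real (Ioc x y) = F1 y - F1 x := by
    rw [← Iic_sdiff_Iic, measureReal_sdiff (Iic_subset_Iic.2 hxy) measurableSet_Iic,
      hIic h0 (hxy.trans h1), hIic (h0.trans hxy) h1]
  have hF0 : F1 0 = 4/7 := by rw [F1_of_mem le_rfl (by norm_num)]; norm_num
  have hF1 : F1 (3/7) = 1 := by rw [F1_of_mem (by norm_num) le_rfl]; norm_num
  have hnonneg (τ : ℝ) : 0 ≤ thrVal τ S := le_thrRun hS 0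
  have hint : Integrable (fun τ => thrVal τ S) μ := by
    refine Integrable.of_bound (measurable_thrRun S measurable_const).aestronglyMeasurable 1 ?_
    filter_upwards with τ
    rw [Real.norm_of_nonneg (hnonneg τ)]
    exact thrRun_le_one τ S zero_le_one
  have hi (c : ℝ) {A : Set ℝ} (hA : MeasurableSet A) : Integrable (A.indicator fun _ => c) μ :=
    (integrable_const c).indicator hA
  have key : ∫ τ, ((Iic 0).indicator (fun _ => g) τ + (Ioc 0 a).indicator (fun _ => u) τ
      + (Ioc a (3/7)).indicator (fun _ => v) τ) ∂μ ≤ ∫ τ, thrVal τ S ∂μ := by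
    refine integral_mono (((hi g measurableSet_Iic).add (hi u measurableSet_Ioc)).add
      (hi v measurableSet_Ioc)) hint fun τ => ?_
    simp only [indicator_apply, mem_Iic, mem_Ioc]
    rcases le_or_gt τ 0 with h0 | h0
    · simp only [h0, h0.not_gt, (h0.trans ha0).not_gt, if_true, false_and, if_false, add_zero]
      rwa [thrVal_of_nonpos hS h0]
    rcases le_or_gt τ a with h1 | h1
    · simp only [h0, h0.not_ge, h1, h1.not_gt, and_self, if_true, false_and, if_false, add_zero,
        zero_add]
      exact hu τ ⟨h0, h1⟩
    rcases le_or_gt τ (3/7) with h2 | h2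
    · simp only [h0.not_ge, h1, h1.not_ge, h2, and_self, and_false, if_true, if_false, zero_add]
      exact hv τ ⟨h1, h2⟩
    · simp only [h0.not_ge, h1.not_ge, h2.not_ge, and_false, if_false, add_zero]
      exact hnonneg τ
  rw [integral_add (f := fun τ => (Iic 0).indicator (fun _ => g) τ
        + (Ioc 0 a).indicator (fun _ => u) τ)
      ((hi g measurableSet_Iic).add (hi u measurableSet_Ioc))
      (hi v measurableSet_Ioc), integral_add (hi g measurableSet_Iic) (hi u measurableSet_Ioc),
    integral_indicator_const _ measurableSet_Iic, integral_indicator_const _ measurableSet_Ioc,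
    integral_indicator_const _ measurableSet_Ioc, hIic le_rfl (by norm_num), hIoc le_rfl ha0 ha1,
    hIoc ha0 ha1 le_rfl, hF0, hF1] at key
  simpa only [smul_eq_mul] using key

/-- A list has a largest element among those at most `c`, with default `0`. -/
lemma exists_max_le {S : List ℝ} (hS : ∀ s ∈ S, 0 < s) (c : ℝ) :
    ∃ a, 0 ≤ a ∧ (a = 0 ∨ a ∈ S ∧ a ≤ c) ∧ ∀ s ∈ S, s ≤ c → s ≤ a := by
  induction S with
  | nil => exact ⟨0, le_rfl, Or.inl rfl, by simp⟩
  | cons x S ih =>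
    rw [List.forall_mem_cons] at hS
    obtain ⟨a, ha0, ha, hmax⟩ := ih hS.2
    by_cases h : x ≤ c ∧ a ≤ x
    · refine ⟨x, hS.1.le, Or.inr ⟨List.mem_cons_self, h.1⟩, ?_⟩
      rw [List.forall_mem_cons]
      exact ⟨fun _ => le_rfl, fun s hs hc => (hmax s hs hc).trans h.2⟩
    · refine ⟨a, ha0, ha.imp_right fun h => ⟨List.mem_cons_of_mem _ h.1, h.2⟩, ?_⟩
      rw [List.forall_mem_cons]
      exact ⟨fun hc => le_of_not_ge fun hx => h ⟨hc, hx⟩, hmax⟩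

/-- The randomized threshold algorithm drawing `τ` from the measure with CDF `F₁`
is 3/7-competitive relative to the optimal fractional packing
`OPT⁺(S) = min{Σ_t s_t, 1}`. -/
theorem thm_three_sevenths_competitive
    (μ : Measure ℝ) [IsProbabilityMeasure μ]
    (hμ : ∀ x : ℝ, μ (Iic x) = ENNReal.ofReal (F1 x))
    (S : List ℝ) (hS : ∀ s ∈ S, s ∈ Ioc (0:ℝ) 1) :
    (3/7) * min S.sum 1 ≤ ∫ τ, thrVal τ S ∂μ := by
  have hpos : ∀ s ∈ S, 0 < s := fun s hs => (hS s hs).1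
  have hmin : min S.sum 1 ≤ 1 := min_le_right _ _
  -- An item of medium size guarantees `3/7` for every threshold.
  have medium {b : ℝ} (hb : b ∈ S) (hb3 : 3 / 7 ≤ b) (hb2 : b ≤ 1 / 2) :
      3 / 7 ≤ ∫ τ, thrVal τ S ∂μ := by
    have hval (τ : ℝ) (hτ : τ ≤ 3 / 7) : 3 / 7 ≤ thrVal τ S :=
      hb3.trans (le_thrVal_of_le_half hpos hb (hτ.trans hb3) hb2)
    have := le_integral_thrVal hμ hpos le_rfl (by norm_num) (hval 0 (by norm_num))
      (fun τ hτ => hval τ (by linarith [hτ.2])) (fun τ hτ => hval τ hτ.2)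
    linarith
  rcases thrRun_zero_eq_or_exists_lt hpos 0 with hall | ⟨b, hb, hbg⟩
  · have hsum : thrVal 0 S = S.sum := hall.trans (zero_add _)
    have hnonneg (τ : ℝ) : 0 ≤ thrVal τ S := le_thrRun hpos 0
    have := le_integral_thrVal hμ hpos le_rfl (by norm_num) hsum.ge
      (fun τ _ => hnonneg τ) (fun τ _ => hnonneg τ)
    linarith [min_le_left S.sum 1, hnonneg 0]
  change 1 - b < thrVal 0 S at hbg
  suffices 3 / 7 ≤ ∫ τ, thrVal τ S ∂μ by linarith
  rcases le_or_gt b (1 / 2) with hb2 | hb2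
  · rcases le_or_gt (3 / 7) b with hb3 | hb3
    · exact medium hb hb3 hb2
    have hb0 := hpos b hb
    refine le_trans ?_ (le_integral_thrVal hμ hpos hb0.le hb3.le hbg.le
      (fun τ hτ => le_thrVal_of_le_half hpos hb hτ.2 hb2) (fun τ _ => le_thrRun hpos 0))
    have hF := F1_mul hb0.le hb3.le
    have hsq : 0 ≤ (4/7 * (1 - b) + (F1 b - 4/7) * b - 3/7) * (1 - 2*b) := by
      linear_combination (1 / 7) * sq_nonneg (1 - 3*b) - b * hF
    have := nonneg_of_mul_nonneg_left hsq (by linarith)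
    linarith
  · obtain ⟨a, ha0, ha, hmax⟩ := exists_max_le hpos (1 / 2)
    have hle (τ : ℝ) (hτ : τ ≤ a) : a ≤ thrVal τ S := by
      rcases ha with rfl | ⟨haS, ha2⟩
      exacts [le_thrRun hpos 0, le_thrVal_of_le_half hpos haS hτ ha2]
    rcases le_or_gt (3 / 7) a with ha3 | ha3
    · rcases ha with rfl | ⟨haS, ha2⟩
      · norm_num at ha3
      · exact medium haS ha3 ha2
    have hbig : ∀ s ∈ S, a < s → max (1 / 2) (1 - thrVal 0 S) ≤ s := by
      intro s hs has
      have hs2 : 1 / 2 < s := lt_of_not_ge fun h => (hmax s hs h).not_gt has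
      refine max_le hs2.le ?_
      rcases le_thrVal_or_lt_thrVal hpos hs (hpos s hs).le with h | h <;> linarith
    refine le_trans ?_ (le_integral_thrVal hμ hpos ha0 ha3.le le_rfl (fun τ hτ => hle τ hτ.2)
      (v := max (1 / 2) (1 - thrVal 0 S))
      (fun τ hτ => le_thrVal_of_forall hS (fun s hs h => hbig s hs (hτ.1.trans_le h))
        ⟨b, hb, by linarith [hτ.2]⟩))
    have hg := hle 0 ha0
    have hF := F1_mul ha0 ha3.le
    obtain ⟨hF4, hF1⟩ := F1_mem_Icc ha0 ha3.le
    generalize thrVal 0 S = g at hg ⊢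
    rcases le_total g (1 / 2) with h | h
    · nlinarith [mul_le_mul_of_nonneg_left (le_max_right (1 / 2) (1 - g)) (sub_nonneg.2 hF1),
        mul_nonneg (sub_nonneg.2 hF4) (sub_nonneg.2 hg)]
    · nlinarith [mul_le_mul_of_nonneg_left (le_max_left (1 / 2) (1 - g)) (sub_nonneg.2 hF1)]
end

section
/- Fix an integer n ≥ 2 and let ε = 2/(3(n−1)), assuming ε < 1/3. Consider the three arrival sequences S₁ = (1/3, 2/3 + ε), S₂ = (ε, ε, …, ε, 1/3) with n copies of ε (so the ε's sum to 2/3 + ε), and S₃ = (ε, 1). Then OPT⁺(S₁) = OPT⁺(S₂) = OPT⁺(S₃) = 1, and for every τ ∈ [0,1]: (3/7)·THR(τ)(S₁) + (3/7)·THR(τ)(S₂) + (1/7)·THR(τ)(S₃) ≤ 3/7 + (4/7)·ε. Consequently no randomized threshold algorithm has competitive ratio greater than 3/7 relative to OPT⁺. -/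
open Set

/-- Optimal fractional packing `OPT⁺(S) = min{Σ_t s_t, 1}`. -/
noncomputable def optPlus (S : List ℝ) : ℝ := min S.sum 1

/-- Copies of an item below the threshold are all rejected. -/
lemma foldl_threshold_replicate_of_lt {τ e : ℝ} (h : e < τ) (k : ℕ) (a : ℝ) :
    (List.replicate k e).foldl
      (fun acc s => if τ ≤ s ∧ acc + s ≤ 1 then acc + s else acc) a = a := by
  induction k with
  | zero => rfl
  | succ k ih => simpa [List.replicate_succ, not_le.mpr h] using ih

/-- Copies of an item above the threshold are all accepted when they fit together. -/
lemma foldl_threshold_replicate_of_le {τ e : ℝ} (h : τ ≤ e) (he : 0 ≤ e) (k : ℕ) (a : ℝ)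
    (ha : a + k * e ≤ 1) :
    (List.replicate k e).foldl
      (fun acc s => if τ ≤ s ∧ acc + s ≤ 1 then acc + s else acc) a = a + k * e := by
  induction k generalizing a with
  | zero => simp
  | succ k ih =>
    push_cast at ha ⊢
    have hk : 0 ≤ (k : ℝ) * e := by positivity
    rw [List.replicate_succ, List.foldl_cons, if_pos ⟨h, by linarith⟩, ih _ (by linarith)]
    ring

/-- The hard distribution over three sequences showing that no randomized threshold
algorithm beats 3/7 relative to `OPT⁺`: with `ε = 2/(3(n−1))`,
`S₁ = (1/3, 2/3+ε)`, `S₂ = (ε,…,ε, 1/3)` (`n` copies of `ε`, summing to `2/3+ε`),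
`S₃ = (ε, 1)`; each has `OPT⁺ = 1`, and every deterministic threshold `τ ∈ [0,1]`
earns at most `3/7 + (4/7)ε` under weights `(3/7, 3/7, 1/7)`. -/
theorem thm_three_sevenths_tight
    (n : ℕ) (hn : 2 ≤ n) (ε : ℝ) (hε : ε = 2 / (3 * ((n : ℝ) - 1)))
    (hε3 : ε < 1/3) :
    optPlus [1/3, 2/3 + ε] = 1 ∧
    optPlus (List.replicate n ε ++ [1/3]) = 1 ∧
    optPlus [ε, 1] = 1 ∧
    ∀ τ ∈ Icc (0:ℝ) 1,
      (3/7) * thrVal τ [1/3, 2/3 + ε]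
        + (3/7) * thrVal τ (List.replicate n ε ++ [1/3])
        + (1/7) * thrVal τ [ε, 1]
      ≤ 3/7 + (4/7) * ε := by
  have hn' : (0 : ℝ) < n - 1 := by
    have : (2 : ℝ) ≤ n := by exact_mod_cast hn
    linarith
  have hpos : 0 < ε := by rw [hε]; positivity
  have hsum : n * ε = 2 / 3 + ε := by
    rw [hε]
    field_simp
    ring
  refine ⟨?_, ?_, ?_, ?_⟩
  · refine min_eq_right ?_
    simp only [List.sum_cons, List.sum_nil]
    linarith
  · refine min_eq_right ?_
    simp only [List.sum_append, List.sum_replicate, List.sum_cons, List.sum_nil, nsmul_eq_mul]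
    linarith
  · refine min_eq_right ?_
    simp only [List.sum_cons, List.sum_nil]
    linarith
  · rintro τ ⟨-, hτ⟩
    simp only [thrVal, List.foldl_append, List.foldl_cons, List.foldl_nil]
    rcases le_or_gt τ ε with h | h
    · rw [foldl_threshold_replicate_of_le h hpos.le n 0 (by linarith), hsum]
      split_ifs <;> grind
    · rw [foldl_threshold_replicate_of_lt h]
      split_ifs <;> grind
end

section
/- For every arrival sequence S = (s_1, …, s_T) with all s_t ∈ (0,1]: (2/3)·THR(0)(S) + (1/3)·THR(1/2)(S) ≥ (1/3)·OPT⁺(S). That is, the randomized algorithm that applies the greedy policy with probability 2/3 and the threshold-1/2 policy with probability 1/3 is 1/3-competitive relative to the optimal fractional packing. -/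
open Set

theorem thrVal_nil (τ : ℝ) : thrVal τ [] = 0 := rfl

theorem thrVal_append_singleton (τ : ℝ) (S : List ℝ) (s : ℝ) :
    thrVal τ (S ++ [s]) =
      if τ ≤ s ∧ thrVal τ S + s ≤ 1 then thrVal τ S + s else thrVal τ S := by
  unfold thrVal
  rw [List.foldl_append, List.foldl_cons, List.foldl_nil]

theorem thrVal_nonneg (τ : ℝ) (S : List ℝ) (hS : ∀ s ∈ S, 0 ≤ s) : 0 ≤ thrVal τ S := by
  induction S using List.reverseRecOn with
  | nil => exact (thrVal_nil τ).ge
  | append_singleton S s ih =>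
    have hs : 0 ≤ s := hS s (by simp)
    have ih := ih fun x hx => hS x (by simp [hx])
    rw [thrVal_append_singleton]
    split_ifs <;> linarith

/-- Either greedy fills half of the knapsack, or it has accepted everything while the
threshold-1/2 policy has accepted nothing, or the two policies together pack at least `1`. -/
theorem greedy_trichotomy (S : List ℝ) (hS : ∀ s ∈ S, s ∈ Ioc (0:ℝ) 1) :
    1/2 ≤ thrVal 0 S ∨ (thrVal 0 S = S.sum ∧ thrVal (1/2) S = 0) ∨
      1 ≤ thrVal 0 S + thrVal (1/2) S := by
  induction S using List.reverseRecOn with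
  | nil => simp [thrVal_nil]
  | append_singleton S s ih =>
    obtain ⟨hs0, hs1⟩ := hS s (by simp)
    have hS' : ∀ x ∈ S, x ∈ Ioc (0:ℝ) 1 := fun x hx => hS x (by simp [hx])
    have hg := thrVal_nonneg 0 S fun x hx => (hS' x hx).1.le
    have ih := ih hS'
    rw [thrVal_append_singleton, thrVal_append_singleton, List.sum_append, List.sum_singleton]
    grind

/-- The randomized algorithm that runs greedy with probability 2/3 and the
threshold-1/2 policy with probability 1/3 is 1/3-competitive relative to the
optimal fractional packing `OPT⁺(S) = min{Σ_t s_t, 1}`. -/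
theorem thm_one_third_competitive
    (S : List ℝ) (hS : ∀ s ∈ S, s ∈ Ioc (0:ℝ) 1) :
    (1/3) * min S.sum 1 ≤ (2/3) * thrVal 0 S + (1/3) * thrVal (1/2) S := by
  have hpos : ∀ s ∈ S, 0 ≤ s := fun s hs => (hS s hs).1.le
  have hg := thrVal_nonneg 0 S hpos
  have ht := thrVal_nonneg (1/2) S hpos
  have hsum := min_le_left S.sum 1
  have hone := min_le_right S.sum 1
  rcases greedy_trichotomy S hS with h | ⟨h, -⟩ | h <;> linarith
end

section
/- For every real m with 0 < m ≤ 3/7: m·(4/7 − m)/(1 − 2m) + (4/7)·(1 − 2m) ≥ 3/7, with equality at m = 1/3. -/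
/-- Key real-variable inequality in the 3/7-competitive analysis (case `m < 1/2`):
for `0 < m ≤ 3/7`, `m·F₁(m) + (4/7)(1 − 2m) ≥ 3/7`, with equality at `m = 1/3`,
where `F₁(m) = (4/7 − m)/(1 − 2m)`. -/
theorem thm_key_inequality_three_sevenths :
    (∀ m : ℝ, 0 < m → m ≤ 3/7 →
      3/7 ≤ m * ((4/7 - m) / (1 - 2*m)) + (4/7) * (1 - 2*m)) ∧
    (1/3 : ℝ) * ((4/7 - 1/3) / (1 - 2*(1/3))) + (4/7) * (1 - 2*(1/3)) = 3/7 := by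
  refine ⟨fun m _ hm => ?_, by norm_num⟩
  have hpos : 0 < 1 - 2 * m := by linarith
  have key : m * ((4/7 - m) / (1 - 2*m)) + (4/7) * (1 - 2*m) - 3/7
      = (3 * m - 1) ^ 2 / (7 * (1 - 2 * m)) := by
    rw [eq_div_iff (by positivity)]
    linear_combination 7 * m * div_mul_cancel₀ (4/7 - m) hpos.ne'
  rw [← sub_nonneg, key]
  positivity
end
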